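/- arXiv:2511.04261 — 5 statements merged into one kernel-verified Lean document; each statement's English description precedes it below -/
import Mathlib

section
/- Let σ > 0 and let λ_σ be the Laplace measure with scale σ on ℝ, i.e., the measure with density t ↦ (1/(2σ))·exp(−|t|/σ) with respect to Lebesgue measure. For real numbers a and b, let μ_a and μ_b denote the pushforwards of λ_σ under the translations x ↦ x + a and x ↦ x + b respectively. Then for every measurable set S ⊆ ℝ, μ_a(S) ≤ exp(|a − b|/σ) · μ_b(S). In particular, if |a − b| ≤ Δ and σ = Δ/ε with ε > 0, then μ_a(S) ≤ exp(ε) · μ_b(S), i.e., the one-dimensional Laplace mechanism with noise scale Δ/ε applied to a real statistic of sensitivity at most Δ satisfies ε-differential privacy. -/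
/-!
Translation preserves Lebesgue measure, so translating `laplaceMeasure σ` by `c` just translates its
density to `y ↦ (1/(2σ)) · exp(−|y − c|/σ)`. Moving `c` from `b` to `a` changes `|y − c|` by at most
`|a − b|`, so the density grows pointwise by a factor of at most `exp(|a − b|/σ)`.
-/

open MeasureTheory

/-- The Laplace measure with scale `σ` on `ℝ`: the measure with density
`t ↦ (1/(2σ)) · exp(−|t|/σ)` with respect to Lebesgue measure. -/
noncomputable def laplaceMeasure (σ : ℝ) : Measure ℝ :=
  volume.withDensity (fun t => ENNReal.ofReal ((1 / (2 * σ)) * Real.exp (-|t| / σ)))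

open scoped ENNReal

theorem map_withDensity_of_measurePreserving {α β : Type*} [MeasurableSpace α] [MeasurableSpace β]
    {μ : Measure α} {ν : Measure β} {e : α ≃ᵐ β} (he : MeasurePreserving e μ ν) (f : α → ℝ≥0∞) :
    (μ.withDensity f).map e = ν.withDensity (f ∘ e.symm) := by
  ext S hS
  rw [e.map_apply, withDensity_apply _ (e.measurable hS), withDensity_apply _ hS,
    ← he.setLIntegral_comp_preimage_emb e.measurableEmbedding]
  simp only [Function.comp_apply, e.symm_apply_apply]

section AddRight

variable {G : Type*} [AddGroup G] [MeasurableSpace G] [MeasurableAdd G]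
  (μ : Measure G) [μ.IsAddRightInvariant]

theorem map_add_right_withDensity (f : G → ℝ≥0∞) (c : G) :
    (μ.withDensity f).map (· + c) = μ.withDensity fun y => f (y - c) := by
  have density_eq : f ∘ (MeasurableEquiv.addRight c).symm = fun y => f (y - c) :=
    funext fun y => congrArg f (sub_eq_add_neg y c).symm
  rw [← density_eq]
  exact map_withDensity_of_measurePreserving (e := MeasurableEquiv.addRight c)
    (measurePreserving_add_right μ c) f

theorem map_add_right_withDensity_le_smul {f : G → ℝ≥0∞} {C : ℝ≥0∞} (hC : C ≠ ∞) {a b : G}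
    (hf : ∀ y, f (y - a) ≤ C * f (y - b)) :
    (μ.withDensity f).map (· + a) ≤ C • (μ.withDensity f).map (· + b) := by
  rw [map_add_right_withDensity, map_add_right_withDensity, ← withDensity_smul' C _ hC]
  exact withDensity_mono (ae_of_all μ hf)

end AddRight

theorem exp_neg_dist_div_le {X : Type*} [PseudoMetricSpace X] {σ ε : ℝ} (hσ : 0 ≤ σ) {a b : X}
    (hab : dist a b / σ ≤ ε) (y : X) :
    Real.exp (-dist y a / σ) ≤ Real.exp ε * Real.exp (-dist y b / σ) := by
  rw [← Real.exp_add, Real.exp_le_exp]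
  calc -dist y a / σ ≤ (dist a b - dist y b) / σ := by
        gcongr
        linarith [dist_triangle y a b]
    _ = dist a b / σ + -dist y b / σ := by ring
    _ ≤ ε + -dist y b / σ := by gcongr

theorem laplaceMeasure_map_add_right_le {σ ε a b : ℝ} (hσ : 0 ≤ σ) (hab : |a - b| / σ ≤ ε) :
    (laplaceMeasure σ).map (· + a) ≤
      ENNReal.ofReal (Real.exp ε) • (laplaceMeasure σ).map (· + b) := by
  refine map_add_right_withDensity_le_smul volume ENNReal.ofReal_ne_top fun y => ?_
  have exp_le : Real.exp (-|y - a| / σ) ≤ Real.exp ε * Real.exp (-|y - b| / σ) :=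
    exp_neg_dist_div_le hσ hab y
  rw [← ENNReal.ofReal_mul (Real.exp_pos ε).le, mul_left_comm]
  gcongr

/-- For translations of the Laplace measure by `a` and `b`, every measurable set `S`
satisfies `μ_a(S) ≤ exp(|a − b|/σ) · μ_b(S)`; in particular, if `|a − b| ≤ Δ` and
`σ = Δ/ε` with `ε > 0`, then `μ_a(S) ≤ exp(ε) · μ_b(S)`, i.e. the one-dimensional
Laplace mechanism with noise scale `Δ/ε` applied to a real statistic of sensitivity
at most `Δ` satisfies `ε`-differential privacy. -/
theorem stmt_1 (σ : ℝ) (hσ : 0 < σ) (a b : ℝ) :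
    (∀ S : Set ℝ, MeasurableSet S →
      (laplaceMeasure σ).map (fun x => x + a) S ≤
        ENNReal.ofReal (Real.exp (|a - b| / σ)) * (laplaceMeasure σ).map (fun x => x + b) S) ∧
    (∀ Δ ε : ℝ, 0 < ε → |a - b| ≤ Δ → σ = Δ / ε →
      ∀ S : Set ℝ, MeasurableSet S →
        (laplaceMeasure σ).map (fun x => x + a) S ≤
          ENNReal.ofReal (Real.exp ε) * (laplaceMeasure σ).map (fun x => x + b) S) := by
  refine ⟨fun S _ => laplaceMeasure_map_add_right_le hσ.le le_rfl S, fun Δ ε hε hΔ hσΔ S _ => ?_⟩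
  have privacy_loss_le : |a - b| / σ ≤ ε := by
    rwa [div_le_iff₀ hσ, hσΔ, mul_div_cancel₀ _ hε.ne']
  exact laplaceMeasure_map_add_right_le hσ.le privacy_loss_le S
end

section
/- Let k ∈ ℕ, σ > 0, and let x, y : Fin k → ℝ satisfy ∑_{i} |x i − y i| ≤ Δ. Let λ_σ^k be the k-fold product of the Laplace measure with scale σ on ℝ, and let μ_x and μ_y be the pushforwards of λ_σ^k under the translations η ↦ x + η and η ↦ y + η respectively. Then for every measurable set S ⊆ (Fin k → ℝ), μ_x(S) ≤ exp(Δ/σ) · μ_y(S). In particular, taking σ = Δ/ε with ε > 0, the mechanism that adds independent Laplace(Δ/ε) noise to each coordinate of a vector-valued statistic whose L1-sensitivity is at most Δ satisfies ε-differential privacy. -/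
/-!
By the triangle inequality `|t - b| ≤ |t - a| + |a - b|`, the Laplace density centred at `a` is at
most `exp (|a - b| / σ)` times the one centred at `b`, so the same holds for the measures.
Domination up to a constant passes to product measures, with the constants multiplying: the
distances of the coordinates add up in the exponent, which is why the `ℓ¹` distance governs the
privacy loss.
-/

open MeasureTheory

open scoped NNReal ENNReal

section Pi

variable {ι : Type*} [Fintype ι] {α : ι → Type*} [∀ i, MeasurableSpace (α i)]

lemma measurePi_mono {μ ν : ∀ i, Measure (α i)} (h : ∀ i, μ i ≤ ν i) :
    Measure.pi μ ≤ Measure.pi ν := by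
  have outer_le : OuterMeasure.pi (fun i => (μ i).toOuterMeasure) ≤
      OuterMeasure.pi (fun i => (ν i).toOuterMeasure) :=
    OuterMeasure.le_pi.2 fun s _ =>
      (OuterMeasure.pi_pi_le _ s).trans (Finset.prod_le_prod' fun i _ => h i (s i))
  refine Measure.le_iff.2 fun s hs => ?_
  simpa only [Measure.pi, toMeasure_apply _ _ hs] using outer_le s

lemma measurePi_smul (c : ι → ℝ≥0) (μ : ∀ i, Measure (α i)) [∀ i, SigmaFinite (μ i)] :
    Measure.pi (fun i => c i • μ i) = (∏ i, c i) • Measure.pi μ := by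
  refine Measure.pi_eq fun s _ => ?_
  simp only [Measure.smul_apply, Measure.pi_pi, ENNReal.smul_def, smul_eq_mul,
    Finset.prod_mul_distrib, ENNReal.ofNNReal_finsetProd]

lemma measurePi_le_prod_smul {c : ι → ℝ≥0} {μ ν : ∀ i, Measure (α i)} [∀ i, SigmaFinite (ν i)]
    (h : ∀ i, μ i ≤ c i • ν i) :
    Measure.pi μ ≤ (∏ i, c i) • Measure.pi ν :=
  (measurePi_mono h).trans_eq (measurePi_smul c ν)

lemma measurePi_map_const_add [∀ i, AddGroup (α i)] [∀ i, MeasurableAdd (α i)]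
    (μ : ∀ i, Measure (α i)) [∀ i, SigmaFinite (μ i)] (x : ∀ i, α i) :
    (Measure.pi μ).map (fun η => x + η) = Measure.pi fun i => (μ i).map (fun t => x i + t) := by
  have (i : ι) : SigmaFinite ((μ i).map (fun t => x i + t)) :=
    (MeasurableEquiv.addLeft (x i)).sigmaFinite_map
  exact Measure.pi_map_pi (f := fun i t => x i + t) fun i =>
    (measurable_const_add (x i)).aemeasurable

end Pi

lemma map_withDensity_comp_of_measurePreserving {α β : Type*} [MeasurableSpace α]
    [MeasurableSpace β] {μ : Measure α} {ν : Measure β} {g : α → β} (hg : MeasurePreserving g μ ν)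
    {f : β → ℝ≥0∞} (hf : Measurable f) :
    (μ.withDensity (f ∘ g)).map g = ν.withDensity f := by
  ext s hs
  rw [Measure.map_apply hg.measurable hs, withDensity_apply _ (hg.measurable hs),
    withDensity_apply _ hs, ← hg.setLIntegral_comp_preimage hs hf]
  rfl

section Laplace

variable (σ : ℝ)

instance laplaceMeasure.instSigmaFinite : SigmaFinite (laplaceMeasure σ) :=
  SigmaFinite.withDensity_ofReal _

lemma laplaceMeasure_map_const_add (a : ℝ) :
    (laplaceMeasure σ).map (fun t => a + t) =
      volume.withDensity
        (fun t => ENNReal.ofReal ((1 / (2 * σ)) * Real.exp (-|t - a| / σ))) := by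
  rw [← map_withDensity_comp_of_measurePreserving (measurePreserving_add_left volume a)
    (by fun_prop)]
  simp only [laplaceMeasure, Function.comp_def, add_sub_cancel_left]

variable {σ}

lemma exp_neg_abs_sub_div_le (hσ : 0 ≤ σ) (a b t : ℝ) :
    Real.exp (-|t - a| / σ) ≤ Real.exp (|a - b| / σ) * Real.exp (-|t - b| / σ) := by
  have triangle : -|t - a| ≤ |a - b| + -|t - b| := by linarith [abs_sub_le t a b]
  rw [← Real.exp_add, ← add_div]
  gcongr

lemma laplaceMeasure_map_const_add_le (hσ : 0 < σ) (a b : ℝ) :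
    (laplaceMeasure σ).map (fun t => a + t) ≤
      (Real.exp (|a - b| / σ)).toNNReal • (laplaceMeasure σ).map (fun t => b + t) := by
  rw [laplaceMeasure_map_const_add, laplaceMeasure_map_const_add, ENNReal.smul_def,
    ← withDensity_smul _ (by fun_prop)]
  refine withDensity_mono (Filter.Eventually.of_forall fun t => ?_)
  rw [Pi.smul_apply, smul_eq_mul, ← ENNReal.ofReal, ← ENNReal.ofReal_mul (Real.exp_nonneg _)]
  refine ENNReal.ofReal_le_ofReal ?_
  rw [mul_left_comm]
  gcongr
  exact exp_neg_abs_sub_div_le hσ.le a b t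

end Laplace

theorem stmt_2_general {ι : Type*} [Fintype ι] {σ : ι → ℝ} (hσ : ∀ i, 0 < σ i) {x y : ι → ℝ}
    {ε : ℝ} (hxy : ∑ i, |x i - y i| / σ i ≤ ε) :
    (Measure.pi fun i => laplaceMeasure (σ i)).map (fun η => x + η) ≤
      ENNReal.ofReal (Real.exp ε) •
        (Measure.pi fun i => laplaceMeasure (σ i)).map (fun η => y + η) := by
  have (i : ι) : SigmaFinite ((laplaceMeasure (σ i)).map (fun t => y i + t)) :=
    (MeasurableEquiv.addLeft (y i)).sigmaFinite_map
  have prod_le : ∏ i, (Real.exp (|x i - y i| / σ i)).toNNReal ≤ (Real.exp ε).toNNReal := by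
    rw [← Real.toNNReal_prod_of_nonneg fun i _ => Real.exp_nonneg _, ← Real.exp_sum]
    gcongr
  rw [measurePi_map_const_add, measurePi_map_const_add]
  calc Measure.pi (fun i => (laplaceMeasure (σ i)).map (fun t => x i + t))
      ≤ (∏ i, (Real.exp (|x i - y i| / σ i)).toNNReal) •
          Measure.pi fun i => (laplaceMeasure (σ i)).map (fun t => y i + t) :=
        measurePi_le_prod_smul fun i => laplaceMeasure_map_const_add_le (hσ i) (x i) (y i)
    _ ≤ ENNReal.ofReal (Real.exp ε) •
          Measure.pi fun i => (laplaceMeasure (σ i)).map (fun t => y i + t) := fun s =>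
        mul_le_mul_left (ENNReal.coe_le_coe.2 prod_le) _

/-- Multivariate Laplace mechanism: if `x, y : Fin k → ℝ` satisfy
`∑ i, |x i − y i| ≤ Δ`, then the pushforwards of the `k`-fold product of the
Laplace measure with scale `σ` under the translations `η ↦ x + η` and `η ↦ y + η`
satisfy `μ_x(S) ≤ exp(Δ/σ) · μ_y(S)` for every measurable set `S`. -/
theorem stmt_2 (k : ℕ) (σ Δ : ℝ) (hσ : 0 < σ) (x y : Fin k → ℝ)
    (hxy : ∑ i, |x i - y i| ≤ Δ)
    (S : Set (Fin k → ℝ)) (hS : MeasurableSet S) :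
    (Measure.pi fun _ : Fin k => laplaceMeasure σ).map (fun η => x + η) S ≤
      ENNReal.ofReal (Real.exp (Δ / σ)) *
        (Measure.pi fun _ : Fin k => laplaceMeasure σ).map (fun η => y + η) S := by
  exact stmt_2_general (fun _ => hσ) (by rw [← Finset.sum_div]; gcongr) S
end

section
/- (Parallel Composition) Let k ∈ ℕ and for each i ∈ Fin k let Ω_i be a measurable space with probability measures P_i and Q_i. Suppose there is an index j ∈ Fin k such that P_i = Q_i for all i ≠ j, and P_j(A) ≤ exp(ε) · Q_j(A) for every measurable set A ⊆ Ω_j. Then the product measures satisfy (⊗_i P_i)(S) ≤ exp(ε) · (⊗_i Q_i)(S) for every measurable set S of the product space ∏_i Ω_i. In other words, if differentially private mechanisms are applied independently to disjoint subsets of the data and a change of one record affects only one subset's mechanism output distribution (by a factor at most exp(ε)), then the joint mechanism satisfies ε-differential privacy. -/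
open MeasureTheory

/-! The product outer measure is the largest one whose value on each nonempty box is at most the
product of the values of the factors on the sides. It is therefore monotone in each factor, and
finite scalars factor out of it as their product. Hence `P i ≤ c i • Q i` for all `i` gives
`⨂ P i ≤ (∏ c i) • ⨂ Q i`, and a change in the single factor `j` corresponds to `c i = 1` for
`i ≠ j`. -/

open scoped NNReal

section

variable {ι : Type*} [Fintype ι] {Ω : ι → Type*}

lemma outerMeasure_pi_mono {m n : ∀ i, OuterMeasure (Ω i)} (h : ∀ i, m i ≤ n i) :
    OuterMeasure.pi m ≤ OuterMeasure.pi n :=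
  OuterMeasure.le_pi.2 fun s _ =>
    (OuterMeasure.pi_pi_le m s).trans (Finset.prod_le_prod' fun i _ => h i (s i))

lemma piPremeasure_smul (c : ι → ℝ≥0) (m : ∀ i, OuterMeasure (Ω i)) :
    piPremeasure (fun i => c i • m i) = (∏ i, c i) • piPremeasure m := by
  ext s
  simp [piPremeasure, ENNReal.smul_def, Finset.prod_mul_distrib]

lemma outerMeasure_pi_smul (c : ι → ℝ≥0) (m : ∀ i, OuterMeasure (Ω i)) :
    OuterMeasure.pi (fun i => c i • m i) = (∏ i, c i) • OuterMeasure.pi m := by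
  rw [OuterMeasure.pi, piPremeasure_smul]
  exact (OuterMeasure.smul_boundedBy ENNReal.coe_ne_top).symm

variable [∀ i, MeasurableSpace (Ω i)]

lemma measure_pi_apply_eq_outerMeasure_pi (μ : ∀ i, Measure (Ω i)) {S : Set (∀ i, Ω i)}
    (hS : MeasurableSet S) :
    Measure.pi μ S = OuterMeasure.pi (fun i => (μ i).toOuterMeasure) S := by
  rw [Measure.pi, toMeasure_apply _ _ hS]

lemma measure_pi_mono {μ ν : ∀ i, Measure (Ω i)} (h : ∀ i, μ i ≤ ν i) :
    Measure.pi μ ≤ Measure.pi ν := by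
  refine Measure.le_iff.2 fun S hS => ?_
  simp only [measure_pi_apply_eq_outerMeasure_pi _ hS]
  exact outerMeasure_pi_mono (fun i => Measure.toOuterMeasure_le.2 (h i)) S

lemma measure_pi_smul (c : ι → ℝ≥0) (μ : ∀ i, Measure (Ω i)) :
    Measure.pi (fun i => c i • μ i) = (∏ i, c i) • Measure.pi μ := by
  ext S hS
  simp only [Measure.smul_apply, measure_pi_apply_eq_outerMeasure_pi _ hS,
    Measure.smul_toOuterMeasure, outerMeasure_pi_smul, smul_apply]

theorem stmt_4_general {P Q : ∀ i, Measure (Ω i)} {c : ι → ℝ≥0} (h : ∀ i, P i ≤ c i • Q i) :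
    Measure.pi P ≤ (∏ i, c i) • Measure.pi Q :=
  (measure_pi_mono h).trans_eq (measure_pi_smul c Q)

end

lemma le_mulSingle_smul {ι : Type*} [DecidableEq ι] {Ω : ι → Type*}
    [∀ i, MeasurableSpace (Ω i)] {P Q : ∀ i, Measure (Ω i)} {c : ℝ≥0} {j : ι}
    (hother : ∀ i, i ≠ j → P i = Q i) (hj : P j ≤ c • Q j) (i : ι) :
    P i ≤ (Pi.mulSingle j c : ι → ℝ≥0) i • Q i := by
  obtain rfl | hij := eq_or_ne i j
  · simpa using hj
  · simp [hij, hother i hij]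

/-- Parallel composition: if `P i = Q i` for all `i ≠ j` and
`P j (A) ≤ exp(ε) · Q j (A)` for every measurable `A`, then the product
probability measures satisfy `(⊗ᵢ Pᵢ)(S) ≤ exp(ε) · (⊗ᵢ Qᵢ)(S)` for every
measurable set `S` of the product space. -/
theorem stmt_4 (k : ℕ) (Ω : Fin k → Type*) [∀ i, MeasurableSpace (Ω i)]
    (P Q : ∀ i, Measure (Ω i))
    [∀ i, IsProbabilityMeasure (P i)] [∀ i, IsProbabilityMeasure (Q i)]
    (ε : ℝ) (j : Fin k)
    (hother : ∀ i, i ≠ j → P i = Q i)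
    (hj : ∀ A : Set (Ω j), MeasurableSet A → P j A ≤ ENNReal.ofReal (Real.exp ε) * Q j A)
    (S : Set (∀ i, Ω i)) (hS : MeasurableSet S) :
    Measure.pi P S ≤ ENNReal.ofReal (Real.exp ε) * Measure.pi Q S := by
  have hle := le_mulSingle_smul hother (Measure.le_iff.2 hj)
  simpa [ENNReal.ofReal] using stmt_4_general hle S
end

section
/- (L1-sensitivity of pixelization) Let M = G_R·b and N = G_C·b, and let I₁, I₂ : Fin M × Fin N → ℝ be images with all values in [0,255] that differ at at most m positions. Then the pixelization vectors satisfy ∑_{(r,c) ∈ Fin G_R × Fin G_C} |μ_{r,c}(I₁) − μ_{r,c}(I₂)| ≤ 255·m/b². -/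
/-- The `b×b` grid with index `(r,c)`: the positions `(i,j)` with
`r·b ≤ i < (r+1)·b` and `c·b ≤ j < (c+1)·b`. -/
def grid (G_R G_C b : ℕ) (rc : Fin G_R × Fin G_C) :
    Finset (Fin (G_R * b) × Fin (G_C * b)) :=
  Finset.univ.filter (fun p =>
    rc.1.val * b ≤ p.1.val ∧ p.1.val < (rc.1.val + 1) * b ∧
    rc.2.val * b ≤ p.2.val ∧ p.2.val < (rc.2.val + 1) * b)

/-- The grid mean `μ_{r,c}(I) = (1/b²) · ∑_{(i,j) ∈ G_{r,c}} I(i,j)`. -/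
noncomputable def gridMean (G_R G_C b : ℕ) (I : Fin (G_R * b) × Fin (G_C * b) → ℝ)
    (rc : Fin G_R × Fin G_C) : ℝ :=
  (1 / (b : ℝ) ^ 2) * ∑ p ∈ grid G_R G_C b rc, I p

/-!
The grids are the fibres of `(i, j) ↦ (i / b, j / b)`, so they partition the image. As the grid
mean is linear, the triangle inequality inside each grid bounds the `L¹` norm of the pixelization
of `I₁ - I₂` by `1 / b²` times the `L¹` norm of `I₁ - I₂`, which is at most the number of differing
positions times the largest possible change of a single pixel.
-/

theorem sum_le_ncard_support_nsmul {ι M : Type*} [Fintype ι] [AddCommMonoid M] [Preorder M]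
    [AddLeftMono M] {f : ι → M} {C : M} (hf : ∀ i ∈ Function.support f, f i ≤ C) :
    ∑ i, f i ≤ (Function.support f).ncard • C := by
  classical
  rw [← Finset.sum_filter_ne_zero, Set.ncard_eq_toFinset_card', Function.support,
    Set.toFinset_ofPred]
  exact Finset.sum_le_card_nsmul _ f C fun i hi => hf i (Finset.mem_filter.1 hi).2

section Grid

variable {G_R G_C b : ℕ}

theorem grid_eq_filter_divNat (rc : Fin G_R × Fin G_C) :
    grid G_R G_C b rc = Finset.univ.filter fun p => (p.1.divNat, p.2.divNat) = rc := by
  ext p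
  have hb : 0 < b := Nat.pos_of_mul_pos_left p.1.pos
  have div_eq_iff (i r : ℕ) : i / b = r ↔ r * b ≤ i ∧ i < (r + 1) * b := by
    rw [Nat.div_eq_iff hb, Nat.succ_mul]
    lia
  simp only [grid, Finset.mem_filter_univ, Prod.ext_iff, Fin.ext_iff, Fin.coe_divNat,
    div_eq_iff, and_assoc]

theorem sum_sum_grid {M : Type*} [AddCommMonoid M] (f : Fin (G_R * b) × Fin (G_C * b) → M) :
    ∑ rc, ∑ p ∈ grid G_R G_C b rc, f p = ∑ p, f p := by
  simp only [grid_eq_filter_divNat, Finset.sum_fiberwise]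

theorem gridMean_sub (I₁ I₂ : Fin (G_R * b) × Fin (G_C * b) → ℝ) (rc : Fin G_R × Fin G_C) :
    gridMean G_R G_C b (I₁ - I₂) rc = gridMean G_R G_C b I₁ rc - gridMean G_R G_C b I₂ rc := by
  simp only [gridMean, Pi.sub_apply, Finset.sum_sub_distrib, mul_sub]

theorem abs_gridMean_le (I : Fin (G_R * b) × Fin (G_C * b) → ℝ) (rc : Fin G_R × Fin G_C) :
    |gridMean G_R G_C b I rc| ≤ (∑ p ∈ grid G_R G_C b rc, |I p|) / (b : ℝ) ^ 2 := by
  rw [gridMean, one_div_mul_eq_div, abs_div, abs_of_nonneg (sq_nonneg (b : ℝ))]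
  gcongr
  exact Finset.abs_sum_le_sum_abs _ _

theorem sum_abs_gridMean_le (I : Fin (G_R * b) × Fin (G_C * b) → ℝ) :
    ∑ rc, |gridMean G_R G_C b I rc| ≤ (∑ p, |I p|) / (b : ℝ) ^ 2 := by
  calc ∑ rc, |gridMean G_R G_C b I rc|
      ≤ ∑ rc, (∑ p ∈ grid G_R G_C b rc, |I p|) / (b : ℝ) ^ 2 :=
        Finset.sum_le_sum fun rc _ => abs_gridMean_le I rc
    _ = (∑ p, |I p|) / (b : ℝ) ^ 2 := by rw [← Finset.sum_div, sum_sum_grid]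

theorem stmt_9_general (hb : 0 < b) {I₁ I₂ : Fin (G_R * b) × Fin (G_C * b) → ℝ} {C : ℝ}
    (hC : ∀ q, |I₁ q - I₂ q| ≤ C) :
    ∑ rc : Fin G_R × Fin G_C, |gridMean G_R G_C b I₁ rc - gridMean G_R G_C b I₂ rc| ≤
      C * {q | I₁ q ≠ I₂ q}.ncard / (b : ℝ) ^ 2 := by
  have sum_abs_sub_le : ∑ q, |I₁ q - I₂ q| ≤ C * {q | I₁ q ≠ I₂ q}.ncard := by
    simpa only [Function.support, ne_eq, abs_eq_zero, sub_eq_zero, nsmul_eq_mul, mul_comm] using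
      sum_le_ncard_support_nsmul fun q _ => hC q
  calc ∑ rc, |gridMean G_R G_C b I₁ rc - gridMean G_R G_C b I₂ rc|
      = ∑ rc, |gridMean G_R G_C b (I₁ - I₂) rc| := by simp only [gridMean_sub]
    _ ≤ (∑ q, |I₁ q - I₂ q|) / (b : ℝ) ^ 2 := sum_abs_gridMean_le (I₁ - I₂)
    _ ≤ C * {q | I₁ q ≠ I₂ q}.ncard / (b : ℝ) ^ 2 :=
        (div_le_div_iff_of_pos_right (by positivity)).2 sum_abs_sub_le

end Grid

/-- L1-sensitivity of pixelization: if two images with values in `[0,255]`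
differ at at most `m` positions, then
`∑_{(r,c)} |μ_{r,c}(I₁) − μ_{r,c}(I₂)| ≤ 255·m/b²`. -/
theorem stmt_9 (G_R G_C b m : ℕ) (hb : 0 < b)
    (I₁ I₂ : Fin (G_R * b) × Fin (G_C * b) → ℝ)
    (hI₁ : ∀ q, I₁ q ∈ Set.Icc (0 : ℝ) 255) (hI₂ : ∀ q, I₂ q ∈ Set.Icc (0 : ℝ) 255)
    (hdiff : {q | I₁ q ≠ I₂ q}.ncard ≤ m) :
    ∑ rc : Fin G_R × Fin G_C,
        |gridMean G_R G_C b I₁ rc - gridMean G_R G_C b I₂ rc| ≤ 255 * m / (b : ℝ) ^ 2 := by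
  have hC (q) : |I₁ q - I₂ q| ≤ 255 := by
    simpa [Real.dist_eq] using Real.dist_le_of_mem_Icc (hI₁ q) (hI₂ q)
  exact (stmt_9_general hb hC).trans (by gcongr)
end

section
/- (Theorem 4: privacy of the parallel per-grid mechanism via parallel composition) Let M = G_R·b, N = G_C·b, m ≥ 1, ε > 0, and σ = 255·m/(b²·ε). Suppose I₁, I₂ : Fin M × Fin N → ℝ are images with values in [0,255] that differ at at most m positions, all of which lie inside a single grid G_{r₀,c₀}. For each image I let μ_I be the product, over grid indices (r,c), of the pushforward of the Laplace measure with scale σ under η ↦ μ_{r,c}(I) + η (i.e., independent per-grid noising). Then μ_{I₁} and μ_{I₂} agree in every factor except the one indexed by (r₀,c₀), the means at (r₀,c₀) satisfy |μ_{r₀,c₀}(I₁) − μ_{r₀,c₀}(I₂)| ≤ 255·m/b², and consequently μ_{I₁}(S) ≤ exp(ε) · μ_{I₂}(S) for every measurable set S of the product output space. -/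
/-!
Disjointness of the grids makes the vector of grid means `1 / b²`-Lipschitz from images to
`Fin G_R × Fin G_C → ℝ`, both with the `ℓ¹` distance, and changing at most `m` pixels moves an
image by at most `255 * m` in that distance. Adding Laplace noise of scale `σ` to each coordinate
of a vector turns an `ℓ¹` distance `d` into a likelihood ratio of at most `exp (d / σ)`: the ratio
in each coordinate is bounded by the triangle inequality in the exponent, and the coordinatewise
factors multiply.
-/

open MeasureTheory

section ParallelComposition

variable {ι : Type*} [Fintype ι] {α : ι → Type*}

lemma outerMeasure_pi_le_smul_pi {μ ν : ∀ i, OuterMeasure (α i)} {c : ι → ENNReal}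
    (hc : ∀ i, c i ≠ ⊤) (h : ∀ i, μ i ≤ c i • ν i) :
    OuterMeasure.pi μ ≤ (∏ i, c i) • OuterMeasure.pi ν := by
  rw [OuterMeasure.pi, OuterMeasure.pi,
    OuterMeasure.smul_boundedBy (ENNReal.prod_ne_top fun i _ => hc i), OuterMeasure.le_boundedBy]
  intro s
  calc OuterMeasure.boundedBy (piPremeasure μ) s
      ≤ ∏ i, μ i (Function.eval i '' s) := OuterMeasure.boundedBy_le s
    _ ≤ ∏ i, c i * ν i (Function.eval i '' s) := Finset.prod_le_prod' fun i _ => h i _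
    _ = (∏ i, c i) * piPremeasure ν s := Finset.prod_mul_distrib

lemma measure_pi_le_smul_pi [∀ i, MeasurableSpace (α i)] {μ ν : ∀ i, Measure (α i)}
    {c : ι → ENNReal} (hc : ∀ i, c i ≠ ⊤) (h : ∀ i, μ i ≤ c i • ν i) :
    Measure.pi μ ≤ (∏ i, c i) • Measure.pi ν := by
  refine Measure.le_iff.2 fun s hs => ?_
  rw [Measure.smul_apply, Measure.pi, Measure.pi, toMeasure_apply _ _ hs, toMeasure_apply _ _ hs]
  exact outerMeasure_pi_le_smul_pi hc (fun i => Measure.le_iff'.1 (h i)) s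

end ParallelComposition

section LaplaceMechanism

lemma map_add_left_withDensity {G : Type*} [AddGroup G] [MeasurableSpace G] [MeasurableAdd G]
    (μ : Measure G) [μ.IsAddLeftInvariant] (f : G → ENNReal) (a : G) :
    (μ.withDensity f).map (a + ·) = μ.withDensity (fun t => f (-a + t)) := by
  ext s hs
  rw [Measure.map_apply (measurable_const_add a) hs,
    withDensity_apply _ (measurable_const_add a hs), withDensity_apply _ hs,
    ← (measurePreserving_add_left μ a).setLIntegral_comp_preimage_emb
      (measurableEmbedding_addLeft a) (fun t => f (-a + t))]
  simp only [neg_add_cancel_left]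

variable {σ : ℝ}

lemma map_add_left_laplaceMeasure_le (hσ : 0 < σ) (a₁ a₂ : ℝ) :
    (laplaceMeasure σ).map (a₁ + ·) ≤
      ENNReal.ofReal (Real.exp (|a₁ - a₂| / σ)) • (laplaceMeasure σ).map (a₂ + ·) := by
  rw [laplaceMeasure, map_add_left_withDensity, map_add_left_withDensity,
    ← withDensity_smul _ (by fun_prop)]
  refine withDensity_mono (ae_of_all _ fun t => ?_)
  rw [Pi.smul_apply, smul_eq_mul, ← ENNReal.ofReal_mul (Real.exp_nonneg _), mul_left_comm,
    ← Real.exp_add, ← add_div]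
  have htriangle : |-a₂ + t| ≤ |a₁ - a₂| + |-a₁ + t| := by
    simpa only [neg_add_eq_sub, add_comm |a₁ - a₂|] using abs_sub_le t a₁ a₂
  beta_reduce
  gcongr
  linarith

variable {ι : Type*} [Fintype ι]

/-- The Laplace mechanism on vectors: the output distribution when independent Laplace noise of
scale `σ` is added to every coordinate of `a`. The parallel per-grid algorithm is the case where
`a` is the family of grid means. -/
noncomputable def laplaceMechanism (σ : ℝ) (a : ι → ℝ) : Measure (ι → ℝ) :=
  Measure.pi fun i => (laplaceMeasure σ).map (fun η => a i + η)

lemma laplaceMechanism_le (hσ : 0 < σ) (a₁ a₂ : ι → ℝ) :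
    laplaceMechanism σ a₁ ≤
      ENNReal.ofReal (Real.exp ((∑ i, |a₁ i - a₂ i|) / σ)) • laplaceMechanism σ a₂ := by
  rw [Finset.sum_div, Real.exp_sum, ENNReal.ofReal_prod_of_nonneg fun i _ => Real.exp_nonneg _]
  exact measure_pi_le_smul_pi (fun _ => ENNReal.ofReal_ne_top)
    fun i => map_add_left_laplaceMeasure_le hσ (a₁ i) (a₂ i)

end LaplaceMechanism

section Sensitivity

lemma sum_abs_sub_le_ncard_nsmul {ι G : Type*} [Fintype ι] [AddCommGroup G] [LinearOrder G]
    [IsOrderedAddMonoid G] {f g : ι → G} {B : G} (h : ∀ i, |f i - g i| ≤ B) :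
    ∑ i, |f i - g i| ≤ {i | f i ≠ g i}.ncard • B := by
  classical
  calc ∑ i, |f i - g i| = ∑ i with f i ≠ g i, |f i - g i| :=
        (Finset.sum_filter_of_ne fun i _ hi => sub_ne_zero.1 (abs_ne_zero.1 hi)).symm
    _ ≤ (Finset.univ.filter fun i => f i ≠ g i).card • B :=
        Finset.sum_le_card_nsmul _ _ _ fun i _ => h i
    _ = {i | f i ≠ g i}.ncard • B := by rw [← Set.ncard_coe_finset, Finset.coe_filter_univ]

variable {G_R G_C b : ℕ}

lemma pairwise_disjoint_grid : Pairwise (Function.onFun Disjoint (grid G_R G_C b)) := by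
  intro rc rc' hne
  refine Finset.disjoint_left.2 fun p hp hp' => hne ?_
  simp only [grid, Finset.mem_filter, Finset.mem_univ, true_and] at hp hp'
  obtain ⟨row_ge, row_lt, col_ge, col_lt⟩ := hp
  obtain ⟨row_ge', row_lt', col_ge', col_lt'⟩ := hp'
  refine Prod.ext (Fin.ext ?_) (Fin.ext ?_)
  · rw [← Nat.div_eq_of_lt_le row_ge row_lt, Nat.div_eq_of_lt_le row_ge' row_lt']
  · rw [← Nat.div_eq_of_lt_le col_ge col_lt, Nat.div_eq_of_lt_le col_ge' col_lt']

lemma gridMean_congr {I₁ I₂ : Fin (G_R * b) × Fin (G_C * b) → ℝ} {rc : Fin G_R × Fin G_C}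
    (h : ∀ q ∈ grid G_R G_C b rc, I₁ q = I₂ q) :
    gridMean G_R G_C b I₁ rc = gridMean G_R G_C b I₂ rc := by
  rw [gridMean, gridMean, Finset.sum_congr rfl h]

lemma abs_gridMean_sub_le (I₁ I₂ : Fin (G_R * b) × Fin (G_C * b) → ℝ) (rc : Fin G_R × Fin G_C) :
    |gridMean G_R G_C b I₁ rc - gridMean G_R G_C b I₂ rc| ≤
      (∑ q ∈ grid G_R G_C b rc, |I₁ q - I₂ q|) / (b : ℝ) ^ 2 := by
  rw [gridMean, gridMean, ← mul_sub, ← Finset.sum_sub_distrib, one_div_mul_eq_div, abs_div,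
    abs_of_nonneg (sq_nonneg (b : ℝ))]
  gcongr
  exact Finset.abs_sum_le_sum_abs _ _

lemma sum_abs_gridMean_sub_le (I₁ I₂ : Fin (G_R * b) × Fin (G_C * b) → ℝ) :
    ∑ rc, |gridMean G_R G_C b I₁ rc - gridMean G_R G_C b I₂ rc| ≤
      (∑ q, |I₁ q - I₂ q|) / (b : ℝ) ^ 2 := by
  classical
  calc ∑ rc, |gridMean G_R G_C b I₁ rc - gridMean G_R G_C b I₂ rc|
      ≤ ∑ rc, (∑ q ∈ grid G_R G_C b rc, |I₁ q - I₂ q|) / (b : ℝ) ^ 2 :=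
        Finset.sum_le_sum fun rc _ => abs_gridMean_sub_le I₁ I₂ rc
    _ = (∑ q ∈ Finset.univ.biUnion (grid G_R G_C b), |I₁ q - I₂ q|) / (b : ℝ) ^ 2 := by
        rw [← Finset.sum_div, Finset.sum_biUnion (pairwise_disjoint_grid.set_pairwise _)]
    _ ≤ (∑ q, |I₁ q - I₂ q|) / (b : ℝ) ^ 2 := by
        gcongr
        exact Finset.subset_univ _

end Sensitivity

theorem stmt_12_general (G_R G_C b : ℕ) (hb : 0 < b) (Δ : ℝ) (hΔ : 0 < Δ) (ε : ℝ) (hε : 0 < ε)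
    (σ : ℝ) (hσ : σ = Δ / ((b : ℝ) ^ 2 * ε))
    (I₁ I₂ : Fin (G_R * b) × Fin (G_C * b) → ℝ) (hdist : ∑ q, |I₁ q - I₂ q| ≤ Δ) :
    (∀ rc : Fin G_R × Fin G_C, (∀ q ∈ grid G_R G_C b rc, I₁ q = I₂ q) →
      (laplaceMeasure σ).map (fun η => gridMean G_R G_C b I₁ rc + η) =
        (laplaceMeasure σ).map (fun η => gridMean G_R G_C b I₂ rc + η)) ∧
    ∑ rc, |gridMean G_R G_C b I₁ rc - gridMean G_R G_C b I₂ rc| ≤ Δ / (b : ℝ) ^ 2 ∧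
    laplaceMechanism σ (gridMean G_R G_C b I₁) ≤
      ENNReal.ofReal (Real.exp ε) • laplaceMechanism σ (gridMean G_R G_C b I₂) := by
  have hσ_pos : 0 < σ := by rw [hσ]; positivity
  have hscale : Δ / (b : ℝ) ^ 2 = ε * σ := by rw [hσ]; field_simp
  have hsens : ∑ rc, |gridMean G_R G_C b I₁ rc - gridMean G_R G_C b I₂ rc| ≤ Δ / (b : ℝ) ^ 2 :=
    (sum_abs_gridMean_sub_le I₁ I₂).trans (by gcongr)
  have hexponent :
      (∑ rc, |gridMean G_R G_C b I₁ rc - gridMean G_R G_C b I₂ rc|) / σ ≤ ε :=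
    (div_le_iff₀ hσ_pos).2 (hsens.trans_eq hscale)
  refine ⟨fun rc hrc => by rw [gridMean_congr hrc], hsens, ?_⟩
  exact (laplaceMechanism_le hσ_pos _ _).trans (by gcongr)

/-- Privacy of the parallel per-grid mechanism via parallel composition: if two
images with values in `[0,255]` differ at at most `m` positions, all lying inside
the single grid `G_{r₀,c₀}`, then the independent per-grid noising distributions
agree in every factor except `(r₀,c₀)`, the means at `(r₀,c₀)` differ by at most
`255·m/b²`, and the product output distributions satisfy
`μ_{I₁}(S) ≤ exp(ε) · μ_{I₂}(S)` for every measurable `S`. -/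
theorem stmt_12 (G_R G_C b m : ℕ) (hb : 0 < b) (hm : 1 ≤ m) (ε : ℝ) (hε : 0 < ε)
    (σ : ℝ) (hσ : σ = 255 * m / ((b : ℝ) ^ 2 * ε))
    (I₁ I₂ : Fin (G_R * b) × Fin (G_C * b) → ℝ)
    (hI₁ : ∀ q, I₁ q ∈ Set.Icc (0 : ℝ) 255) (hI₂ : ∀ q, I₂ q ∈ Set.Icc (0 : ℝ) 255)
    (rc₀ : Fin G_R × Fin G_C)
    (hdiff : {q | I₁ q ≠ I₂ q}.ncard ≤ m)
    (hloc : ∀ q, I₁ q ≠ I₂ q → q ∈ grid G_R G_C b rc₀) :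
    (∀ rc : Fin G_R × Fin G_C, rc ≠ rc₀ →
      (laplaceMeasure σ).map (fun η => gridMean G_R G_C b I₁ rc + η) =
        (laplaceMeasure σ).map (fun η => gridMean G_R G_C b I₂ rc + η)) ∧
    |gridMean G_R G_C b I₁ rc₀ - gridMean G_R G_C b I₂ rc₀| ≤ 255 * m / (b : ℝ) ^ 2 ∧
    (∀ S : Set ((Fin G_R × Fin G_C) → ℝ), MeasurableSet S →
      (Measure.pi fun rc =>
          (laplaceMeasure σ).map (fun η => gridMean G_R G_C b I₁ rc + η)) S ≤
        ENNReal.ofReal (Real.exp ε) *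
          (Measure.pi fun rc =>
            (laplaceMeasure σ).map (fun η => gridMean G_R G_C b I₂ rc + η)) S) := by
  have hdist : ∑ q, |I₁ q - I₂ q| ≤ 255 * m := by
    calc ∑ q, |I₁ q - I₂ q| ≤ {q | I₁ q ≠ I₂ q}.ncard • (255 : ℝ) :=
          sum_abs_sub_le_ncard_nsmul fun q =>
            abs_sub_le_of_nonneg_of_le (hI₁ q).1 (hI₁ q).2 (hI₂ q).1 (hI₂ q).2
      _ ≤ 255 * m := by rw [nsmul_eq_mul, mul_comm]; gcongr
  obtain ⟨hfactor, hsens, hprivacy⟩ :=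
    stmt_12_general G_R G_C b hb (255 * m) (by positivity) ε hε σ hσ I₁ I₂ hdist
  refine ⟨fun rc hrc => hfactor rc fun q hq => ?_, ?_, fun S _ => hprivacy S⟩
  · by_contra hne
    exact Finset.disjoint_left.1 (pairwise_disjoint_grid hrc) hq (hloc q hne)
  · exact (Finset.single_le_sum (fun _ _ => abs_nonneg _) (Finset.mem_univ rc₀)).trans hsens
end
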